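/- arXiv:2311.08696 — 3 statements merged into one kernel-verified Lean document; each statement's English description precedes it below -/
import Mathlib

section
/- Let p be a prime, l ≥ 1, and let ζ be a primitive p^l-th root of unity. If f(x), g(x) ∈ ℤ[x] satisfy f(ζ) = g(ζ), then for every integer k with 0 ≤ k < φ(p^l) one has f^{(k)}(1)/k! ≡ g^{(k)}(1)/k! (mod p). -/
open Polynomial

/-- Let `p` be a prime, `l ≥ 1`, and `ζ` a primitive `p^l`-th root of
unity. If `f, g ∈ ℤ[x]` satisfy `f(ζ) = g(ζ)`, then for every `0 ≤ k < φ(p^l)` one has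
`f^{(k)}(1)/k! ≡ g^{(k)}(1)/k! (mod p)`; equivalently `p * k!` divides
`f^{(k)}(1) − g^{(k)}(1)`. -/
theorem iterate_derivative_one_modEq_of_aeval_eq
    (p : ℕ) (hp : p.Prime) (l : ℕ) (hl : 1 ≤ l) (ζ : ℂ)
    (hζ : IsPrimitiveRoot ζ (p ^ l)) (f g : Polynomial ℤ)
    (hfg : Polynomial.aeval ζ f = Polynomial.aeval ζ g)
    (k : ℕ) (hk : k < Nat.totient (p ^ l)) :
    ((p : ℤ) * (Nat.factorial k : ℤ)) ∣
      ((Polynomial.derivative^[k] f).eval 1 - (Polynomial.derivative^[k] g).eval 1) := by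
  have := Fact.mk hp
  have hdvd : cyclotomic (p ^ l) ℤ ∣ f - g := by
    rw [cyclotomic_eq_minpoly hζ (pow_pos hp.pos l)]
    exact minpoly.isIntegrallyClosed_dvd (hζ.isIntegral (pow_pos hp.pos l))
      (by rw [map_sub, hfg, sub_self])
  obtain ⟨q, hq⟩ := hdvd
  have hE : ∀ n, n < Nat.totient (p ^ l) →
      (p : ℤ) ∣ (taylor 1 (cyclotomic (p ^ l) ℤ)).coeff n := by
    obtain ⟨m, rfl⟩ : ∃ m, l = m + 1 := ⟨l - 1, by omega⟩
    intro n hn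
    have h := (cyclotomic_prime_pow_comp_X_add_one_isEisensteinAt p m).mem (n := n) (by
      rw [natDegree_comp, natDegree_cyclotomic, ← C_1, natDegree_X_add_C, mul_one]
      exact hn)
    rw [Submodule.mem_span_singleton] at h
    obtain ⟨a, ha⟩ := h
    rw [taylor_apply, C_1, ← ha]
    exact ⟨a, by simp [mul_comm]⟩
  have hc : (p : ℤ) ∣ (hasseDeriv k (f - g)).eval 1 := by
    rw [← taylor_coeff, hq, taylor_mul, coeff_mul]
    refine Finset.dvd_sum fun x hx => Dvd.dvd.mul_right (hE _ ?_) _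
    have := Finset.HasAntidiagonal.mem_antidiagonal.mp hx
    omega
  have hd : (derivative^[k] f).eval 1 - (derivative^[k] g).eval 1
      = (Nat.factorial k : ℤ) * (hasseDeriv k (f - g)).eval 1 := by
    rw [← eval_sub, ← iterate_derivative_sub, ← factorial_smul_hasseDeriv]
    simp
  rw [hd, mul_comm]
  exact mul_dvd_mul_left _ hc
end

section
/- Let p be a prime, l ≥ 1, n = p^l, ζ a primitive n-th root of unity, and χ = 1 − ζ. Then for every integer k with 1 ≤ k ≤ φ(n) and every polynomial f(x) ∈ ℤ[x]: χ^k divides f(ζ) in ℤ[ζ] if and only if f(1) ≡ f^{(1)}(1)/1! ≡ ⋯ ≡ f^{(k−1)}(1)/(k−1)! ≡ 0 (mod p). -/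
open Polynomial

lemma aux_mem_closure_iff (ζ w : ℂ) :
    w ∈ Subring.closure ({ζ} : Set ℂ) ↔ ∃ q : ℤ[X], aeval ζ q = w := by
  constructor
  · intro h
    induction h using Subring.closure_induction with
    | mem x hx => exact ⟨X, by simpa using (Set.mem_singleton_iff.mp hx).symm⟩
    | zero => exact ⟨0, by simp⟩
    | one => exact ⟨1, by simp⟩
    | add x y _ _ hx hy =>
      obtain ⟨a, rfl⟩ := hx
      obtain ⟨b, rfl⟩ := hy
      exact ⟨a + b, by simp⟩
    | neg x _ hx =>
      obtain ⟨a, rfl⟩ := hx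
      exact ⟨-a, by simp⟩
    | mul x y _ _ hx hy =>
      obtain ⟨a, rfl⟩ := hx
      obtain ⟨b, rfl⟩ := hy
      exact ⟨a * b, by simp⟩
  · rintro ⟨q, rfl⟩
    induction q using Polynomial.induction_on' with
    | add a b ha hb => rw [map_add]; exact add_mem ha hb
    | monomial n a =>
      rw [aeval_monomial]
      have h1 : ζ ∈ Subring.closure ({ζ} : Set ℂ) := Subring.subset_closure (Set.mem_singleton ζ)
      have h2 : algebraMap ℤ ℂ a ∈ Subring.closure ({ζ} : Set ℂ) := by
        rw [eq_intCast]
        exact intCast_mem _ a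
      exact Subring.mul_mem _ h2 (Subring.pow_mem _ h1 n)

lemma aux_dvd_iff (p : ℕ) (j : ℕ) (f : ℤ[X]) :
    ((p : ℤ) * (Nat.factorial j : ℤ)) ∣ (derivative^[j] f).eval 1 ↔
      ((taylor 1 f).map (Int.castRingHom (ZMod p))).coeff j = 0 := by
  have h : (derivative^[j] f).eval 1 = (taylor 1 f).coeff j * (Nat.factorial j : ℤ) := by
    rw [taylor_coeff, ← factorial_smul_hasseDeriv]
    simp [mul_comm]
  rw [h, coeff_map, eq_intCast, ZMod.intCast_zmod_eq_zero_iff_dvd]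
  exact mul_dvd_mul_iff_right (by exact_mod_cast Nat.factorial_ne_zero j)

lemma aux_p (p : ℕ) (hp : p.Prime) (l : ℕ) (hl : 1 ≤ l) (ζ : ℂ)
    (hζ : IsPrimitiveRoot ζ (p ^ l)) :
    ∃ q : ℤ[X], (p : ℂ) = (1 - ζ) ^ Nat.totient (p ^ l) * aeval ζ q := by
  have := Fact.mk hp
  have h1 : eval 1 (cyclotomic (p ^ l) ℂ) = p := by
    obtain ⟨m, rfl⟩ : ∃ m, l = m + 1 := ⟨l - 1, by omega⟩
    exact eval_one_cyclotomic_prime_pow m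
  rw [cyclotomic_eq_prod_X_sub_primitiveRoots hζ, eval_prod] at h1
  have h2 : ∀ μ ∈ primitiveRoots (p ^ l) ℂ,
      ∃ q : ℤ[X], eval 1 (X - C μ) = (1 - ζ) * aeval ζ q := by
    intro μ hμ
    have hpos : 0 < p ^ l := pow_pos hp.pos l
    have hμ' := (mem_primitiveRoots hpos).1 hμ
    have : NeZero (p ^ l) := ⟨hpos.ne'⟩
    obtain ⟨i, -, rfl⟩ := hζ.eq_pow_of_pow_eq_one hμ'.pow_eq_one
    refine ⟨∑ a ∈ Finset.range i, X ^ a, ?_⟩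
    simp [mul_neg_geom_sum]
  choose! q hq using h2
  rw [Finset.prod_congr rfl hq, Finset.prod_mul_distrib, Finset.prod_const,
    hζ.card_primitiveRoots] at h1
  exact ⟨∏ μ ∈ primitiveRoots (p ^ l) ℂ, q μ, by rw [map_prod, h1]⟩

lemma aux_cyc (p : ℕ) (hp : p.Prime) (l : ℕ) (hl : 1 ≤ l) :
    (taylor 1 (cyclotomic (p ^ l) ℤ)).map (Int.castRingHom (ZMod p))
      = X ^ Nat.totient (p ^ l) := by
  have := Fact.mk hp
  have h := cyclotomic_mul_prime_pow_eq (ZMod p) (p := p) (m := 1) (k := l)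
    (by simpa using hp.one_lt.ne') hl
  rw [mul_one, cyclotomic_one] at h
  rw [taylor_apply, map_comp, map_cyclotomic, h, Nat.totient_prime_pow hp hl]
  have : p ^ l - p ^ (l - 1) = p ^ (l - 1) * (p - 1) := by
    obtain ⟨m, rfl⟩ : ∃ m, l = m + 1 := ⟨l - 1, by omega⟩
    simp [pow_succ, Nat.mul_sub]
  rw [this]
  simp

theorem chi_pow_dvd_iff_iterate_derivative_modEq_zero
    (p : ℕ) (hp : p.Prime) (l : ℕ) (hl : 1 ≤ l) (ζ : ℂ)
    (hζ : IsPrimitiveRoot ζ (p ^ l)) (k : ℕ) (hk1 : 1 ≤ k)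
    (hk2 : k ≤ Nat.totient (p ^ l)) (f : Polynomial ℤ) :
    (∃ w ∈ Subring.closure ({ζ} : Set ℂ),
        Polynomial.aeval ζ f = (1 - ζ) ^ k * w) ↔
      (∀ j < k, ((p : ℤ) * (Nat.factorial j : ℤ)) ∣
        (Polynomial.derivative^[j] f).eval 1) := by
  have hpos : 0 < p ^ l := pow_pos hp.pos l
  simp only [aux_dvd_iff]
  rw [← X_pow_dvd_iff]
  constructor
  · rintro ⟨w, hw, h⟩
    obtain ⟨q, rfl⟩ := (aux_mem_closure_iff ζ w).1 hw
    have h0 : aeval ζ (f - (1 - X) ^ k * q) = 0 := by simp [h]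
    have hd := minpoly.isIntegrallyClosed_dvd (hζ.isIntegral hpos) h0
    rw [← cyclotomic_eq_minpoly hζ hpos] at hd
    obtain ⟨r, hr⟩ := hd
    have hf : f = (1 - X) ^ k * q + cyclotomic (p ^ l) ℤ * r := by rw [← hr]; ring
    rw [hf, map_add, taylor_mul, taylor_mul, Polynomial.map_add, Polynomial.map_mul,
      Polynomial.map_mul, aux_cyc p hp l hl]
    refine dvd_add (Dvd.dvd.mul_right ?_ _) (Dvd.dvd.mul_right (pow_dvd_pow _ hk2) _)
    rw [taylor_pow, Polynomial.map_pow]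
    apply pow_dvd_pow_of_dvd
    simp [taylor_apply]
  · intro h
    obtain ⟨B, hB⟩ : ∃ A B : ℤ[X], taylor 1 f = X ^ k * A + C (p : ℤ) * B := by
      obtain ⟨A', hA⟩ := h
      obtain ⟨A, rfl⟩ := map_surjective (Int.castRingHom (ZMod p)) (ZMod.ringHom_surjective _) A'
      refine ⟨A, ?_⟩
      have : C (p : ℤ) ∣ taylor 1 f - X ^ k * A := by
        rw [C_dvd_iff_dvd_coeff]
        intro i
        rw [← ZMod.intCast_zmod_eq_zero_iff_dvd, ← eq_intCast (Int.castRingHom (ZMod p)),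
          ← coeff_map]
        simp [hA, Polynomial.map_sub]
      obtain ⟨B, hB⟩ := this
      exact ⟨B, by rw [← hB]; ring⟩
    obtain ⟨B', hB⟩ := hB
    obtain ⟨q, hq⟩ := aux_p p hp l hl ζ hζ
    have e : aeval ζ f = aeval (ζ - 1) (taylor 1 f) := by
      rw [taylor_apply, aeval_comp]; simp
    refine ⟨aeval ζ ((-1) ^ k * B.comp (X - 1) +
      (1 - X) ^ (Nat.totient (p ^ l) - k) * q * B'.comp (X - 1)),
      (aux_mem_closure_iff ζ _).2 ⟨_, rfl⟩, ?_⟩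
    rw [e, hB]
    have e2 : (1 - ζ) ^ Nat.totient (p ^ l) =
        (1 - ζ) ^ k * (1 - ζ) ^ (Nat.totient (p ^ l) - k) := by
      rw [← pow_add, Nat.add_sub_cancel' hk2]
    have e3 : (ζ - 1) ^ k = (1 - ζ) ^ k * (-1) ^ k := by
      rw [← mul_pow]; ring
    simp only [map_add, map_mul, map_pow, aeval_X, aeval_C, aeval_comp, map_sub, map_one,
      map_neg, e3]
    have e4 : (algebraMap ℤ ℂ) (p : ℤ) = (p : ℂ) := by simp
    rw [e4, hq, e2]
    ring
end

section
/- Let ω = e^{2πi/3} and χ = 1 − ω. The group of 3×3 unitary matrices generated by H = (1/√(−3))[[1,1,1],[1,ω,ω²],[1,ω²,ω]], S = diag(1, ω, 1), and R = diag(1, 1, −1) is equal to U(3, ℤ[ω][1/χ]), the group of all 3×3 unitary matrices whose entries lie in ℤ[ω][1/χ]. -/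
noncomputable section

/-- `ω = e^{2πi/3}`, a primitive 3rd root of unity. -/
def ω : ℂ := Complex.exp (2 * Real.pi * Complex.I / 3)

/-- `χ = 1 − ω`. -/
def χ : ℂ := 1 - ω

/-- The ring of cyclotomic integers `ℤ[ω]`, as a subring of `ℂ`. -/
def Zω : Subring ℂ := Subring.closure {ω}

/-- The qutrit Hadamard gate `H = (1/√(−3))[[1,1,1],[1,ω,ω²],[1,ω²,ω]]`,
where `√(−3) = ω(1 − ω)`. -/
def Hgate : Matrix (Fin 3) (Fin 3) ℂ :=
  (ω * (1 - ω))⁻¹ • !![1, 1, 1; 1, ω, ω ^ 2; 1, ω ^ 2, ω]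

/-- `S = diag(1, ω, 1)`. -/
def Sgate : Matrix (Fin 3) (Fin 3) ℂ := Matrix.diagonal ![1, ω, 1]

/-- The metaplectic gate `R = diag(1, 1, −1)`. -/
def Rgate : Matrix (Fin 3) (Fin 3) ℂ := Matrix.diagonal ![1, 1, -1]

open Matrix

theorem om_prim : IsPrimitiveRoot ω 3 := by
  have := Complex.isPrimitiveRoot_exp 3 (by norm_num)
  simpa [ω] using this

theorem om_sq : ω ^ 2 = -1 - ω := by
  have h3 : ω ^ 3 = 1 := om_prim.pow_eq_one
  have h1 : ω - 1 ≠ 0 := sub_ne_zero.mpr (om_prim.ne_one (by norm_num))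
  apply mul_left_cancel₀ h1
  linear_combination h3

theorem om_conj : star ω = -1 - ω := by
  have h3 : ω ^ 3 = 1 := om_prim.pow_eq_one
  have hn : ‖ω‖ = 1 := om_prim.norm'_eq_one (by norm_num)
  have h0 : ω ≠ 0 := om_prim.ne_zero (by norm_num)
  have h : ω * star ω = 1 := by
    have := Complex.mul_conj ω
    rw [Complex.normSq_eq_norm_sq, hn] at this
    simpa using this
  apply mul_left_cancel₀ h0
  rw [h]
  linear_combination om_sq

theorem om_mem : ω ∈ Zω := Subring.subset_closure rfl

theorem zom_iff (x : ℂ) : x ∈ Zω ↔ ∃ a b : ℤ, x = a + b * ω := by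
  constructor
  · intro hx
    induction hx using Subring.closure_induction with
    | mem x hx => exact ⟨0, 1, by simpa using hx⟩
    | zero => exact ⟨0, 0, by simp⟩
    | one => exact ⟨1, 0, by simp⟩
    | add x y _ _ h1 h2 =>
      obtain ⟨a, b, rfl⟩ := h1
      obtain ⟨c, d, rfl⟩ := h2
      exact ⟨a + c, b + d, by push_cast; ring⟩
    | neg x _ h1 =>
      obtain ⟨a, b, rfl⟩ := h1
      exact ⟨-a, -b, by push_cast; ring⟩
    | mul x y _ _ h1 h2 =>
      obtain ⟨a, b, rfl⟩ := h1
      obtain ⟨c, d, rfl⟩ := h2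
      exact ⟨a * c - b * d, a * d + b * c - b * d, by
        push_cast; linear_combination (b * d : ℂ) * om_sq⟩
  · rintro ⟨a, b, rfl⟩
    exact add_mem (intCast_mem _ _) (mul_mem (intCast_mem _ _) om_mem)

theorem zom_norm (a b : ℤ) :
    star ((a : ℂ) + b * ω) * (a + b * ω) = ((a ^ 2 - a * b + b ^ 2 : ℤ) : ℂ) := by
  have h1 : star ((a : ℂ) + b * ω) = a + b * (-1 - ω) := by
    rw [star_add, star_mul', om_conj]; simp
  rw [h1]; push_cast
  linear_combination (-b ^ 2 : ℂ) * om_sq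

theorem chi_sq : χ ^ 2 = -3 * ω := by
  unfold χ; linear_combination om_sq

theorem chi_ne : χ ≠ 0 := by
  unfold χ
  exact sub_ne_zero.mpr (om_prim.ne_one (by norm_num)).symm

theorem chi_mem : χ ∈ Zω := sub_mem (one_mem _) om_mem

theorem chi_norm : star χ * χ = 3 := by
  unfold χ
  rw [star_sub, om_conj, star_one]
  linear_combination -om_sq

theorem H_eq : Hgate = (-(2 * ω + 1) / 3 : ℂ) • !![1, 1, 1; 1, ω, ω ^ 2; 1, ω ^ 2, ω] := by
  unfold Hgate
  congr 1
  apply inv_eq_of_mul_eq_one_right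
  linear_combination ((2 * ω - 3) / 3 : ℂ) * om_sq

theorem H_star : Hgateᴴ =
    ((2 * ω + 1) / 3 : ℂ) • !![1, 1, 1; 1, ω ^ 2, ω; 1, ω, ω ^ 2] := by
  have h1 : (starRingEnd ℂ) ω = -1 - ω := om_conj
  have h2 := om_sq
  rw [H_eq]
  ext i j
  fin_cases i <;> fin_cases j <;> simp [h1] <;> grind

theorem S_star : Sgateᴴ = Matrix.diagonal ![1, ω ^ 2, 1] := by
  have h1 : (starRingEnd ℂ) ω = -1 - ω := om_conj
  unfold Sgate
  ext i j
  fin_cases i <;> fin_cases j <;> simp [h1, om_sq]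

theorem R_star : Rgateᴴ = Rgate := by
  unfold Rgate
  ext i j
  fin_cases i <;> fin_cases j <;> simp

/-- The gate monoid. -/
def GG : Submonoid (Matrix (Fin 3) (Fin 3) ℂ) :=
  Submonoid.closure ({Hgate, Sgate, Rgate, Hgate.conjTranspose,
        Sgate.conjTranspose, Rgate.conjTranspose} : Set (Matrix (Fin 3) (Fin 3) ℂ))

theorem GG_star {g : Matrix (Fin 3) (Fin 3) ℂ} (hg : g ∈ GG) : gᴴ ∈ GG := by
  induction hg using Submonoid.closure_induction with
  | mem x hx =>
    apply Submonoid.subset_closure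
    simp only [Set.mem_insert_iff, Set.mem_singleton_iff] at hx ⊢
    rcases hx with rfl | rfl | rfl | rfl | rfl | rfl <;> simp
  | one => simp
  | mul x y _ _ h1 h2 => rw [conjTranspose_mul]; exact mul_mem h2 h1

/-- The localized ring. -/
def LL : Subring ℂ where
  carrier := {z | ∃ f : ℕ, χ ^ f * z ∈ Zω}
  zero_mem' := ⟨0, by simp⟩
  one_mem' := ⟨0, by simp⟩
  add_mem' := by
    rintro a b ⟨f, hf⟩ ⟨g, hg⟩
    refine ⟨f + g, ?_⟩
    have := add_mem (mul_mem (pow_mem chi_mem g) hf) (mul_mem (pow_mem chi_mem f) hg)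
    convert this using 1; ring
  neg_mem' := by
    rintro a ⟨f, hf⟩
    exact ⟨f, by simpa using hf⟩
  mul_mem' := by
    rintro a b ⟨f, hf⟩ ⟨g, hg⟩
    refine ⟨f + g, ?_⟩
    convert mul_mem hf hg using 1; ring

theorem om_LL : ω ∈ LL := ⟨0, by simpa using om_mem⟩

theorem third_LL : (1 / 3 : ℂ) ∈ LL := ⟨2, by
  rw [chi_sq]; convert neg_mem om_mem using 1; ring⟩

theorem H_unit : Hgate * Hgateᴴ = 1 := by
  have h2 := om_sq
  rw [H_star, H_eq]
  ext i j
  fin_cases i <;> fin_cases j <;> simp [Matrix.mul_apply, Fin.sum_univ_three, Matrix.vecMul_diagonal] <;> grind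

theorem S_unit : Sgate * Sgateᴴ = 1 := by
  have h2 := om_sq
  rw [S_star]; unfold Sgate
  ext i j
  fin_cases i <;> fin_cases j <;> simp [Matrix.mul_apply, Fin.sum_univ_three, Matrix.vecMul_diagonal] <;> grind

theorem R_unit : Rgate * Rgateᴴ = 1 := by
  rw [R_star]; unfold Rgate
  ext i j
  fin_cases i <;> fin_cases j <;> simp [Matrix.mul_apply, Fin.sum_univ_three, Matrix.vecMul_diagonal]

theorem scal_LL (z : ℂ) (hz : z ∈ Zω) : z / 3 ∈ LL := by
  have : z ∈ LL := ⟨0, by simpa using hz⟩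
  convert mul_mem this third_LL using 1; ring

theorem c_LL : -(2 * ω + 1) / 3 ∈ LL :=
  scal_LL _ (neg_mem (add_mem (mul_mem (ofNat_mem _ 2) om_mem) (one_mem _)))

theorem c_LL' : (2 * ω + 1) / 3 ∈ LL :=
  scal_LL _ (add_mem (mul_mem (ofNat_mem _ 2) om_mem) (one_mem _))

theorem GG_ring {g : Matrix (Fin 3) (Fin 3) ℂ} (hg : g ∈ GG) :
    (∀ i j, g i j ∈ LL) ∧ g * gᴴ = 1 := by
  induction hg using Submonoid.closure_induction with
  | mem x hx =>
    simp only [Set.mem_insert_iff, Set.mem_singleton_iff] at hx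
    have h1 := c_LL
    have h2 := c_LL'
    have h3 := om_LL
    have h4 := pow_mem om_LL 2
    rcases hx with rfl | rfl | rfl | rfl | rfl | rfl
    · refine ⟨fun i j => ?_, H_unit⟩
      rw [H_eq]
      rw [Matrix.smul_apply]
      refine mul_mem h1 ?_
      fin_cases i <;> fin_cases j <;> simp [h3, h4, one_mem]
    · refine ⟨fun i j => ?_, S_unit⟩
      unfold Sgate
      fin_cases i <;> fin_cases j <;> simp [h3, h4, one_mem]
    · refine ⟨fun i j => ?_, R_unit⟩
      unfold Rgate
      fin_cases i <;> fin_cases j <;> simp [one_mem]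
    · refine ⟨fun i j => ?_, by rw [conjTranspose_conjTranspose]; exact mul_eq_one_comm.mp H_unit⟩
      rw [H_star]
      rw [Matrix.smul_apply]
      refine mul_mem h2 ?_
      fin_cases i <;> fin_cases j <;> simp [h3, h4, one_mem]
    · refine ⟨fun i j => ?_, by rw [conjTranspose_conjTranspose]; exact mul_eq_one_comm.mp S_unit⟩
      rw [S_star]
      fin_cases i <;> fin_cases j <;> simp [h3, h4, one_mem]
    · refine ⟨fun i j => ?_, by rw [conjTranspose_conjTranspose]; exact mul_eq_one_comm.mp R_unit⟩
      rw [R_star]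
      unfold Rgate
      fin_cases i <;> fin_cases j <;> simp [one_mem]
  | one =>
    refine ⟨fun i j => ?_, by simp⟩
    rw [Matrix.one_apply]; split_ifs
    · exact one_mem _
    · exact zero_mem _
  | mul x y _ _ h1 h2 =>
    refine ⟨fun i j => ?_, ?_⟩
    · rw [Matrix.mul_apply]
      exact sum_mem fun k _ => mul_mem (h1.1 _ _) (h2.1 _ _)
    · rw [conjTranspose_mul, mul_assoc, ← mul_assoc y, h2.2, one_mul, h1.2]

/-! Monomial matrices in the group -/

theorem gH : Hgate ∈ GG := Submonoid.subset_closure (by simp)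
theorem gS : Sgate ∈ GG := Submonoid.subset_closure (by simp)
theorem gR : Rgate ∈ GG := Submonoid.subset_closure (by simp)
theorem gH' : Hgateᴴ ∈ GG := GG_star gH

/-- Swap of coordinates 1 and 2. -/
def PP : Matrix (Fin 3) (Fin 3) ℂ := !![1, 0, 0; 0, 0, 1; 0, 1, 0]
/-- Cyclic shift. -/
def XX : Matrix (Fin 3) (Fin 3) ℂ := !![0, 1, 0; 0, 0, 1; 1, 0, 0]

theorem HH : Hgate * Hgate = -PP := by
  have h2 := om_sq
  rw [H_eq, PP]
  ext i j
  fin_cases i <;> fin_cases j <;> simp [Matrix.mul_apply, Fin.sum_univ_three, Matrix.vecMul_diagonal] <;> grind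

theorem gNP : -PP ∈ GG := HH ▸ mul_mem gH gH

/-- Units of the Eisenstein integers. -/
def IsU (u : ℂ) : Prop := ∃ s t : ℕ, u = (-1) ^ s * ω ^ t

theorem gD2 (u : ℂ) (hu : IsU u) : Matrix.diagonal ![1, 1, u] ∈ GG := by
  obtain ⟨s, t, rfl⟩ := hu
  have h : Matrix.diagonal ![1, 1, (-1) ^ s * ω ^ t] = Rgate ^ s * (-PP * Sgate * -PP) ^ t := by
    have : -PP * Sgate * -PP = Matrix.diagonal ![1, 1, ω] := by
      unfold PP Sgate
      ext i j
      fin_cases i <;> fin_cases j <;> simp [Matrix.mul_apply, Fin.sum_univ_three, Matrix.vecMul_diagonal]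
    rw [this, Rgate, Matrix.diagonal_pow, Matrix.diagonal_pow, Matrix.diagonal_mul_diagonal]
    congr 1
    ext i
    fin_cases i <;> simp
  rw [h]
  exact mul_mem (pow_mem gR _) (pow_mem (mul_mem (mul_mem gNP gS) gNP) _)

theorem gZ : Matrix.diagonal ![1, ω, ω ^ 2] ∈ GG := by
  have h : Matrix.diagonal ![1, ω, ω ^ 2] = Sgate * Matrix.diagonal ![1, 1, ω ^ 2] := by
    unfold Sgate
    ext i j
    fin_cases i <;> fin_cases j <;> simp
  rw [h]
  exact mul_mem gS (gD2 _ ⟨0, 2, by simp⟩)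

theorem gX : XX ∈ GG := by
  have h : XX = Hgate * Matrix.diagonal ![1, ω, ω ^ 2] * Hgateᴴ := by
    have h2 := om_sq
    rw [H_star, H_eq, XX]
    ext i j
    fin_cases i <;> fin_cases j <;> simp [Matrix.mul_apply, Fin.sum_univ_three, Matrix.vecMul_diagonal] <;> grind
  rw [h]
  exact mul_mem (mul_mem gH gZ) gH'

theorem PP0 (A : Matrix (Fin 3) (Fin 3) ℂ) (j : Fin 3) : (PP * A) 0 j = A 0 j := by
  simp [PP, Matrix.mul_apply, Fin.sum_univ_three]

theorem PP1 (A : Matrix (Fin 3) (Fin 3) ℂ) (j : Fin 3) : (PP * A) 1 j = A 2 j := by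
  simp [PP, Matrix.mul_apply, Fin.sum_univ_three]

theorem PP2 (A : Matrix (Fin 3) (Fin 3) ℂ) (j : Fin 3) : (PP * A) 2 j = A 1 j := by
  simp [PP, Matrix.mul_apply, Fin.sum_univ_three]

theorem XX0 (A : Matrix (Fin 3) (Fin 3) ℂ) (j : Fin 3) : (XX * A) 0 j = A 1 j := by
  simp [XX, Matrix.mul_apply, Fin.sum_univ_three]

theorem XX1 (A : Matrix (Fin 3) (Fin 3) ℂ) (j : Fin 3) : (XX * A) 1 j = A 2 j := by
  simp [XX, Matrix.mul_apply, Fin.sum_univ_three]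

theorem XX2 (A : Matrix (Fin 3) (Fin 3) ℂ) (j : Fin 3) : (XX * A) 2 j = A 0 j := by
  simp [XX, Matrix.mul_apply, Fin.sum_univ_three]

theorem shiftD (a b c : ℂ) : XX * Matrix.diagonal ![a, b, c] * (XX * XX) =
    Matrix.diagonal ![b, c, a] := by
  rw [mul_assoc]
  ext i j
  fin_cases i <;> simp [XX0, XX1, XX2, Matrix.diagonal_mul] <;> fin_cases j <;> simp [XX]

theorem gD (u v w : ℂ) (hu : IsU u) (hv : IsU v) (hw : IsU w) :
    Matrix.diagonal ![u, v, w] ∈ GG := by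
  have hX := gX
  have sh : ∀ a b c, Matrix.diagonal ![a, b, c] ∈ GG → Matrix.diagonal ![b, c, a] ∈ GG := by
    intro a b c h
    rw [← shiftD]
    exact mul_mem (mul_mem hX h) (mul_mem hX hX)
  have h1 := sh _ _ _ (gD2 v hv)
  have h2 := sh _ _ _ (sh _ _ _ (gD2 u hu))
  have h : Matrix.diagonal ![u, v, w] = Matrix.diagonal ![u, 1, 1] * Matrix.diagonal ![1, v, 1] *
      Matrix.diagonal ![1, 1, w] := by
    rw [Matrix.diagonal_mul_diagonal, Matrix.diagonal_mul_diagonal]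
    congr 1
    ext i
    fin_cases i <;> simp
  rw [h]
  exact mul_mem (mul_mem h2 h1) (gD2 w hw)

theorem isU_one : IsU 1 := ⟨0, 0, by simp⟩
theorem isU_neg {u : ℂ} (h : IsU u) : IsU (-u) := by
  obtain ⟨s, t, rfl⟩ := h
  exact ⟨s + 1, t, by ring⟩
theorem isU_om : IsU ω := ⟨0, 1, by simp⟩
theorem isU_om2 : IsU (-1 - ω) := ⟨0, 2, by simp [om_sq]⟩

theorem gP : PP ∈ GG := by
  have h : PP = Matrix.diagonal ![-1, -1, -1] * -PP := by
    unfold PP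
    ext i j
    fin_cases i <;> fin_cases j <;> simp [Matrix.mul_apply, Fin.sum_univ_three, Matrix.vecMul_diagonal]
  rw [h]
  have := isU_neg isU_one
  exact mul_mem (gD _ _ _ this this this) gNP

/-! Arithmetic -/

theorem chi_dvd (a b : ℤ) (h : (a + b) % 3 = 0) : ∃ y ∈ Zω, (a + b * ω : ℂ) = χ * y := by
  obtain ⟨c, hc⟩ := Int.dvd_of_emod_eq_zero h
  have ha : a = 3 * c - b := by omega
  refine ⟨((2 * c - b : ℤ) : ℂ) + (c : ℤ) * ω, (zom_iff _).2 ⟨_, _, rfl⟩, ?_⟩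
  subst ha
  unfold χ
  push_cast
  linear_combination (c : ℂ) * om_sq

theorem unit_adj (a b : ℤ) (h : (a + b) % 3 ≠ 0) :
    ∃ u, IsU u ∧ ∃ w ∈ Zω, u * (a + b * ω : ℂ) = 1 + 3 * w := by
  obtain ⟨p, hp⟩ : ∃ p, p = a / 3 := ⟨_, rfl⟩
  obtain ⟨q, hq⟩ : ∃ q, q = b / 3 := ⟨_, rfl⟩
  have key : ∀ u : ℂ, IsU u → ∀ m n : ℤ, u * (a + b * ω : ℂ) = 1 + 3 * (m + n * ω) →
      ∃ u, IsU u ∧ ∃ w ∈ Zω, u * (a + b * ω : ℂ) = 1 + 3 * w := fun u hu m n e =>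
    ⟨u, hu, _, (zom_iff _).2 ⟨m, n, rfl⟩, e⟩
  have h2 := om_sq
  rcases (by omega : (a = 3 * p + 1 ∧ b = 3 * q) ∨ (a = 3 * p ∧ b = 3 * q + 1) ∨
    (a = 3 * p + 2 ∧ b = 3 * q + 2) ∨ (a = 3 * p + 2 ∧ b = 3 * q) ∨ (a = 3 * p ∧ b = 3 * q + 2) ∨
    (a = 3 * p + 1 ∧ b = 3 * q + 1)) with ⟨rfl, rfl⟩ | ⟨rfl, rfl⟩ | ⟨rfl, rfl⟩ | ⟨rfl, rfl⟩ |
      ⟨rfl, rfl⟩ | ⟨rfl, rfl⟩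
  · exact key 1 isU_one p q (by push_cast; ring)
  · exact key (-1 - ω) isU_om2 (q - p) (-p) (by push_cast; grind)
  · exact key ω isU_om (-q - 1) (p - q) (by push_cast; grind)
  · exact key (-1) (isU_neg isU_one) (-p - 1) (-q) (by push_cast; grind)
  · exact key (-(-1 - ω)) (isU_neg isU_om2) (p - q - 1) (p) (by push_cast; grind)
  · exact key (-ω) (isU_neg isU_om) q (q - p) (by push_cast; grind)

theorem norm_pos (a b : ℤ) : 0 ≤ a ^ 2 - a * b + b ^ 2 := by
  nlinarith [sq_nonneg (a - b), sq_nonneg (a + b)]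

theorem nrm_zero (a b : ℤ) (h : a ^ 2 - a * b + b ^ 2 = 0) : (a + b * ω : ℂ) = 0 := by
  have hb : b = 0 := by nlinarith [sq_nonneg (2 * a - b), sq_nonneg b]
  subst hb
  have ha : a = 0 := by simpa using h
  simp [ha]

theorem norm_one_unit (a b : ℤ) (h : a ^ 2 - a * b + b ^ 2 = 1) :
    ∃ u, IsU u ∧ u * (a + b * ω : ℂ) = 1 := by
  have hb : b ^ 2 ≤ 1 := by nlinarith [sq_nonneg (2 * a - b)]
  have ha : a ^ 2 ≤ 1 := by nlinarith [sq_nonneg (2 * b - a)]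
  have h1 : b ≤ 1 := by nlinarith
  have h2 : -1 ≤ b := by nlinarith
  have h3 : a ≤ 1 := by nlinarith
  have h4 : -1 ≤ a := by nlinarith
  have hh := om_sq
  interval_cases a <;> interval_cases b <;> simp at h
  · exact ⟨ω, isU_om, by push_cast; grind⟩
  · exact ⟨-1, isU_neg isU_one, by push_cast; grind⟩
  · exact ⟨-(-1 - ω), isU_neg isU_om2, by push_cast; grind⟩
  · exact ⟨(-1 - ω), isU_om2, by push_cast; grind⟩
  · exact ⟨1, isU_one, by push_cast; grind⟩
  · exact ⟨-ω, isU_neg isU_om, by push_cast; grind⟩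

theorem norm_mod (a b : ℤ) : ∃ k, a ^ 2 - a * b + b ^ 2 = (a + b) ^ 2 + 3 * k :=
  ⟨-a * b, by ring⟩

/-- Hermitian norm squared of a vector. -/
def nn (x : Fin 3 → ℂ) : ℂ := star (x 0) * x 0 + star (x 1) * x 1 + star (x 2) * x 2

theorem nn_eq (x : Fin 3 → ℂ) : nn x = star x ⬝ᵥ x := by
  simp [nn, dotProduct, Fin.sum_univ_three]

theorem nn_unit (g : Matrix (Fin 3) (Fin 3) ℂ) (hg : g ∈ GG) (x : Fin 3 → ℂ) :
    nn (g *ᵥ x) = nn x := by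
  have h := mul_eq_one_comm.mp (GG_ring hg).2
  rw [nn_eq, nn_eq, star_mulVec, dotProduct_mulVec, vecMul_vecMul, h, vecMul_one]

theorem nn_smul (c : ℂ) (x : Fin 3 → ℂ) : nn (c • x) = (star c * c) * nn x := by
  simp only [nn, Pi.smul_apply, smul_eq_mul, star_mul']; ring

theorem sq_mod3 (s t r n : ℤ) (h : s ^ 2 + t ^ 2 + r ^ 2 = 3 * n) :
    (s % 3 = 0 ∧ t % 3 = 0 ∧ r % 3 = 0) ∨ (s % 3 ≠ 0 ∧ t % 3 ≠ 0 ∧ r % 3 ≠ 0) := by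
  have key : ∀ z : ℤ, (z % 3 = 0 ∧ z ^ 2 % 3 = 0) ∨ (z % 3 ≠ 0 ∧ z ^ 2 % 3 = 1) := by
    intro z
    rcases (by omega : z % 3 = 0 ∨ z % 3 = 1 ∨ z % 3 = 2) with h | h | h <;>
      simp [h, pow_two, Int.mul_emod]
  have := key s
  have := key t
  have := key r
  omega

theorem resid (a0 b0 a1 b1 a2 b2 : ℤ) (k : ℕ)
    (h : nn ![a0 + b0 * ω, a1 + b1 * ω, a2 + b2 * ω] = 3 ^ (k + 1)) :
    ((a0 + b0) % 3 = 0 ∧ (a1 + b1) % 3 = 0 ∧ (a2 + b2) % 3 = 0) ∨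
      ((a0 + b0) % 3 ≠ 0 ∧ (a1 + b1) % 3 ≠ 0 ∧ (a2 + b2) % 3 ≠ 0) := by
  have h' : (a0 ^ 2 - a0 * b0 + b0 ^ 2) + (a1 ^ 2 - a1 * b1 + b1 ^ 2) +
      (a2 ^ 2 - a2 * b2 + b2 ^ 2) = 3 ^ (k + 1) := by
    have : nn ![a0 + b0 * ω, a1 + b1 * ω, a2 + b2 * ω] =
      star ((a0 : ℂ) + b0 * ω) * (a0 + b0 * ω) + star ((a1 : ℂ) + b1 * ω) * (a1 + b1 * ω) +
      star ((a2 : ℂ) + b2 * ω) * (a2 + b2 * ω) := rfl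
    rw [this, zom_norm, zom_norm, zom_norm] at h
    exact_mod_cast h
  apply sq_mod3 _ _ _ (3 ^ k + a0 * b0 + a1 * b1 + a2 * b2)
  linear_combination h'

theorem vec_form (x : Fin 3 → ℂ) (hx : ∀ i, x i ∈ Zω) : ∃ a0 b0 a1 b1 a2 b2 : ℤ,
    x = ![a0 + b0 * ω, a1 + b1 * ω, a2 + b2 * ω] := by
  obtain ⟨a0, b0, h0⟩ := (zom_iff _).1 (hx 0)
  obtain ⟨a1, b1, h1⟩ := (zom_iff _).1 (hx 1)
  obtain ⟨a2, b2, h2⟩ := (zom_iff _).1 (hx 2)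
  refine ⟨a0, b0, a1, b1, a2, b2, ?_⟩
  ext i
  fin_cases i
  · exact h0
  · exact h1
  · exact h2

theorem vec_mem (a b c : ℂ) (ha : a ∈ Zω) (hb : b ∈ Zω) (hc : c ∈ Zω) :
    ∀ i, (![a, b, c] : Fin 3 → ℂ) i ∈ Zω := by
  intro i
  fin_cases i
  · exact ha
  · exact hb
  · exact hc

/-- One reduction step. The group element is trivial if some coordinate vanishes. -/
theorem step (k : ℕ) (x : Fin 3 → ℂ) (hx : ∀ i, x i ∈ Zω) (hn : nn x = 3 ^ (k + 1)) :
    ∃ g ∈ GG, ∃ y : Fin 3 → ℂ, (∀ i, y i ∈ Zω) ∧ g *ᵥ x = χ • y ∧ (x 0 = 0 → g = 1) := by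
  obtain ⟨a0, b0, a1, b1, a2, b2, rfl⟩ := vec_form x hx
  rcases resid _ _ _ _ _ _ _ hn with ⟨h0, h1, h2⟩ | ⟨h0, h1, h2⟩
  · obtain ⟨y0, m0, e0⟩ := chi_dvd _ _ h0
    obtain ⟨y1, m1, e1⟩ := chi_dvd _ _ h1
    obtain ⟨y2, m2, e2⟩ := chi_dvd _ _ h2
    refine ⟨1, one_mem _, ![y0, y1, y2], vec_mem _ _ _ m0 m1 m2, ?_, fun _ => rfl⟩
    rw [e0, e1, e2]
    simp
  · obtain ⟨u0, i0, w0, m0, e0⟩ := unit_adj _ _ h0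
    obtain ⟨u1, i1, w1, m1, e1⟩ := unit_adj _ _ h1
    obtain ⟨u2, i2, w2, m2, e2⟩ := unit_adj _ _ h2
    refine ⟨Hgate * Matrix.diagonal ![u0, u1, u2], mul_mem gH (gD _ _ _ i0 i1 i2),
      ![-ω * (1 + w0 + w1 + w2), -ω * (w0 + ω * w1 + ω ^ 2 * w2),
        -ω * (w0 + ω ^ 2 * w1 + ω * w2)], ?_, ?_, ?_⟩
    · have ho := om_mem
      have ho2 := pow_mem om_mem 2
      exact vec_mem _ _ _
        (mul_mem (neg_mem ho) (add_mem (add_mem (add_mem (one_mem _) m0) m1) m2))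
        (mul_mem (neg_mem ho) (add_mem (add_mem m0 (mul_mem ho m1)) (mul_mem ho2 m2)))
        (mul_mem (neg_mem ho) (add_mem (add_mem m0 (mul_mem ho2 m1)) (mul_mem ho m2)))
    · have hd : Matrix.diagonal ![u0, u1, u2] *ᵥ
          ![(a0 : ℂ) + b0 * ω, a1 + b1 * ω, a2 + b2 * ω] =
          ![1 + 3 * w0, 1 + 3 * w1, 1 + 3 * w2] := by
        rw [← e0, ← e1, ← e2]
        ext i
        rw [mulVec_diagonal]
        fin_cases i <;> rfl
      rw [← mulVec_mulVec, hd, H_eq]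
      have h2 := om_sq
      ext i
      fin_cases i <;> simp [mulVec, dotProduct, Fin.sum_univ_three, χ] <;> grind
    · intro hz
      exfalso
      have hz' : (a0 : ℂ) + b0 * ω = 0 := hz
      have hN := zom_norm a0 b0
      rw [hz', mul_zero] at hN
      have hN' : a0 ^ 2 - a0 * b0 + b0 ^ 2 = 0 := by exact_mod_cast hN.symm
      have hb : b0 = 0 := by nlinarith [sq_nonneg (2 * a0 - b0), sq_nonneg b0]
      subst hb
      have ha : a0 = 0 := by simpa using hN'
      subst ha
      simp at h0

theorem reduce (k : ℕ) : ∀ (x : Fin 3 → ℂ), (∀ i, x i ∈ Zω) → nn x = 3 ^ k →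
    ∃ g ∈ GG, ∃ y : Fin 3 → ℂ, (∀ i, y i ∈ Zω) ∧ g *ᵥ x = χ ^ k • y ∧ nn y = 1 ∧
      (x 0 = 0 → g = 1) := by
  induction k with
  | zero =>
    intro x hx hn
    exact ⟨1, one_mem _, x, hx, by simp, by simpa using hn, fun _ => rfl⟩
  | succ k ih =>
    intro x hx hn
    obtain ⟨g, hg, y, hy, e, hz⟩ := step k x hx hn
    have hny : nn y = 3 ^ k := by
      have h1 := nn_unit g hg x
      rw [e, nn_smul, chi_norm, hn, pow_succ] at h1
      linear_combination h1 / 3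
    obtain ⟨g', hg', y', hy', e', hn', hz'⟩ := ih y hy hny
    refine ⟨g' * g, mul_mem hg' hg, y', hy', ?_, hn', ?_⟩
    · rw [← mulVec_mulVec, e, mulVec_smul, e', smul_smul, pow_succ, mul_comm]
    · intro h0
      have h1 := hz h0
      subst h1
      have : y 0 = 0 := by
        have := congrFun e 0
        simp [h0, chi_ne] at this
        exact this
      rw [hz' this, one_mul]

/-- Reduction for vectors over the localized ring. -/
theorem reduceL (v : Fin 3 → ℂ) (hv : ∀ i, v i ∈ LL) (hn : nn v = 1) :
    ∃ g ∈ GG, (∀ i, (g *ᵥ v) i ∈ Zω) ∧ nn (g *ᵥ v) = 1 ∧ (v 0 = 0 → g = 1) := by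
  choose f hf using hv
  have hint : ∀ i, (χ ^ (f 0 + f 1 + f 2) • v) i ∈ Zω := by
    intro i
    have hle : f i ≤ f 0 + f 1 + f 2 := by fin_cases i <;> simp <;> omega
    obtain ⟨d, hd⟩ := Nat.exists_eq_add_of_le hle
    rw [hd, Pi.smul_apply, smul_eq_mul, pow_add]
    convert mul_mem (pow_mem chi_mem d) (hf i) using 1; ring
  have hn' : nn (χ ^ (f 0 + f 1 + f 2) • v) = 3 ^ (f 0 + f 1 + f 2) := by
    rw [nn_smul, hn, star_pow, ← mul_pow, chi_norm, mul_one]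
  obtain ⟨g, hg, y, hy, e, hny, hz⟩ := reduce _ _ hint hn'
  have hgv : g *ᵥ v = y := by
    rw [mulVec_smul] at e
    exact smul_right_injective _ (pow_ne_zero _ chi_ne) e
  refine ⟨g, hg, by rwa [hgv], by rwa [hgv], fun h => hz (by simp [h])⟩

/-- An integral vector of norm 1 has one unit entry. -/
theorem unit_vec (y : Fin 3 → ℂ) (hy : ∀ i, y i ∈ Zω) (hn : nn y = 1) :
    ∃ u, IsU u ∧ ((u * y 0 = 1 ∧ y 1 = 0 ∧ y 2 = 0) ∨ (y 0 = 0 ∧ u * y 1 = 1 ∧ y 2 = 0) ∨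
      (y 0 = 0 ∧ y 1 = 0 ∧ u * y 2 = 1)) := by
  obtain ⟨a0, b0, a1, b1, a2, b2, rfl⟩ := vec_form y hy
  have h' : (a0 ^ 2 - a0 * b0 + b0 ^ 2) + (a1 ^ 2 - a1 * b1 + b1 ^ 2) +
      (a2 ^ 2 - a2 * b2 + b2 ^ 2) = 1 := by
    have : nn ![a0 + b0 * ω, a1 + b1 * ω, a2 + b2 * ω] =
      star ((a0 : ℂ) + b0 * ω) * (a0 + b0 * ω) + star ((a1 : ℂ) + b1 * ω) * (a1 + b1 * ω) +
      star ((a2 : ℂ) + b2 * ω) * (a2 + b2 * ω) := rfl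
    rw [this, zom_norm, zom_norm, zom_norm] at hn
    exact_mod_cast hn
  have p0 := norm_pos a0 b0
  have p1 := norm_pos a1 b1
  have p2 := norm_pos a2 b2
  have z0 := nrm_zero a0 b0
  have z1 := nrm_zero a1 b1
  have z2 := nrm_zero a2 b2
  have u0 := norm_one_unit a0 b0
  have u1 := norm_one_unit a1 b1
  have u2 := norm_one_unit a2 b2
  generalize a0 ^ 2 - a0 * b0 + b0 ^ 2 = n0 at *
  generalize a1 ^ 2 - a1 * b1 + b1 ^ 2 = n1 at *
  generalize a2 ^ 2 - a2 * b2 + b2 ^ 2 = n2 at *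
  rcases (by omega : (n0 = 1 ∧ n1 = 0 ∧ n2 = 0) ∨ (n0 = 0 ∧ n1 = 1 ∧ n2 = 0) ∨
    (n0 = 0 ∧ n1 = 0 ∧ n2 = 1)) with ⟨q0, q1, q2⟩ | ⟨q0, q1, q2⟩ | ⟨q0, q1, q2⟩
  · obtain ⟨u, hu, e⟩ := u0 q0
    exact ⟨u, hu, Or.inl ⟨e, z1 q1, z2 q2⟩⟩
  · obtain ⟨u, hu, e⟩ := u1 q1
    exact ⟨u, hu, Or.inr (Or.inl ⟨z0 q0, e, z2 q2⟩)⟩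
  · obtain ⟨u, hu, e⟩ := u2 q2
    exact ⟨u, hu, Or.inr (Or.inr ⟨z0 q0, z1 q1, e⟩)⟩

/-- The target group, as a predicate. -/
def Good (U : Matrix (Fin 3) (Fin 3) ℂ) : Prop := (∀ i j, U i j ∈ LL) ∧ U * Uᴴ = 1

theorem good_mul {g U : Matrix (Fin 3) (Fin 3) ℂ} (hg : g ∈ GG) (hU : Good U) : Good (g * U) := by
  obtain ⟨h1, h2⟩ := GG_ring hg
  refine ⟨fun i j => ?_, ?_⟩
  · rw [Matrix.mul_apply]
    exact sum_mem fun k _ => mul_mem (h1 _ _) (hU.1 _ _)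
  · rw [conjTranspose_mul, mul_assoc, ← mul_assoc U, hU.2, one_mul, h2]

theorem back {g U : Matrix (Fin 3) (Fin 3) ℂ} (hg : g ∈ GG) (h : g * U ∈ GG) : U ∈ GG := by
  have h1 := mul_eq_one_comm.mp (GG_ring hg).2
  have : U = gᴴ * (g * U) := by rw [← mul_assoc, h1, one_mul]
  rw [this]
  exact mul_mem (GG_star hg) h

theorem good_cols {U : Matrix (Fin 3) (Fin 3) ℂ} (hU : Good U) (i j : Fin 3) :
    star (U 0 i) * U 0 j + star (U 1 i) * U 1 j + star (U 2 i) * U 2 j = if i = j then 1 else 0 := by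
  have h := congrArg (fun M : Matrix (Fin 3) (Fin 3) ℂ => M i j) (mul_eq_one_comm.mp hU.2)
  simp only [Matrix.mul_apply, Fin.sum_univ_three, Matrix.one_apply] at h
  exact h

theorem good_col_nn {U : Matrix (Fin 3) (Fin 3) ℂ} (hU : Good U) (j : Fin 3) :
    nn (U.col j) = 1 := by
  have := good_cols hU j j
  rw [if_pos rfl] at this
  exact this

/-- Columns `e0` and `e1`. -/
theorem fin2 {U : Matrix (Fin 3) (Fin 3) ℂ} (hU : Good U) (h00 : U 0 0 = 1) (h10 : U 1 0 = 0)
    (h20 : U 2 0 = 0) (h01 : U 0 1 = 0) (h11 : U 1 1 = 1) (h21 : U 2 1 = 0) : U ∈ GG := by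
  have h02 : U 0 2 = 0 := by simpa [h00, h10, h20] using good_cols hU 0 2
  have h12 : U 1 2 = 0 := by simpa [h01, h11, h21] using good_cols hU 1 2
  obtain ⟨g, hg, hi, hn, hz⟩ := reduceL (U.col 2) (fun i => hU.1 i 2) (good_col_nn hU 2)
  rw [hz h02, one_mulVec] at hi hn
  obtain ⟨u, hu, h⟩ := unit_vec _ hi hn
  simp only [Matrix.col_apply, h02, h12, mul_zero, zero_ne_one, false_and, and_false, false_or,
    true_and] at h
  refine back (gD2 u hu) ?_
  convert one_mem GG
  ext i j
  fin_cases i <;> fin_cases j <;>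
    simp [Matrix.diagonal_mul, h00, h10, h20, h01, h11, h21, h02, h12, h]

/-- Column `e0`. -/
theorem fin1 {U : Matrix (Fin 3) (Fin 3) ℂ} (hU : Good U) (h00 : U 0 0 = 1) (h10 : U 1 0 = 0)
    (h20 : U 2 0 = 0) : U ∈ GG := by
  have h01 : U 0 1 = 0 := by simpa [h00, h10, h20] using good_cols hU 0 1
  obtain ⟨g, hg, hi, hn, hz⟩ := reduceL (U.col 1) (fun i => hU.1 i 1) (good_col_nn hU 1)
  rw [hz h01, one_mulVec] at hi hn
  obtain ⟨u, hu, h⟩ := unit_vec _ hi hn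
  simp only [Matrix.col_apply, h01, mul_zero, zero_ne_one, false_and, false_or,
    true_and] at h
  rcases h with ⟨h1, h2⟩ | ⟨h1, h2⟩
  · have hm := gD 1 u 1 isU_one hu isU_one
    refine back hm (fin2 (good_mul hm hU) ?_ ?_ ?_ ?_ ?_ ?_) <;>
      simp [Matrix.diagonal_mul, h00, h10, h20, h01, h1, h2]
  · have hm := mul_mem gP (gD2 u hu)
    refine back hm (fin2 (good_mul hm hU) ?_ ?_ ?_ ?_ ?_ ?_) <;>
      simp [mul_assoc, PP0, PP1, PP2, Matrix.diagonal_mul, h00, h10, h20, h01, h1, h2]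

theorem fin0 {U : Matrix (Fin 3) (Fin 3) ℂ} (hU : Good U) : U ∈ GG := by
  obtain ⟨g, hg, hi, hn, -⟩ := reduceL (U.col 0) (fun i => hU.1 i 0) (good_col_nn hU 0)
  refine back hg ?_
  have hV := good_mul hg hU
  have hc : ∀ i, (g *ᵥ U.col 0) i = (g * U) i 0 := fun i => rfl
  obtain ⟨u, hu, h⟩ := unit_vec _ hi hn
  simp only [hc] at h
  generalize g * U = V at hV h
  have hX := gX
  have hD := gD u u u hu hu hu
  rcases h with ⟨h0, h1, h2⟩ | ⟨h0, h1, h2⟩ | ⟨h0, h1, h2⟩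
  · refine back hD (fin1 (good_mul hD hV) ?_ ?_ ?_) <;>
      simp [Matrix.diagonal_mul, h0, h1, h2]
  · have hm := mul_mem hX hD
    refine back hm (fin1 (good_mul hm hV) ?_ ?_ ?_) <;>
      simp [mul_assoc, XX0, XX1, XX2, Matrix.diagonal_mul, h0, h1, h2]
  · have hm := mul_mem (mul_mem hX hX) hD
    refine back hm (fin1 (good_mul hm hV) ?_ ?_ ?_) <;>
      simp [mul_assoc, XX0, XX1, XX2, Matrix.diagonal_mul, h0, h1, h2]

/-- exact synthesis for Clifford+R: the group generated by
`H`, `S` and `R` — i.e. all finite products of these unitary matrices and their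
inverses (the inverse of a unitary being its conjugate transpose) — equals
`U(3, ℤ[ω][1/χ])`, the group of all `3 × 3` unitary matrices whose entries lie in
`ℤ[ω][1/χ]`. -/
theorem cliffordR_eq_unitary_ring :
    (↑(Submonoid.closure ({Hgate, Sgate, Rgate, Hgate.conjTranspose,
        Sgate.conjTranspose, Rgate.conjTranspose} :
          Set (Matrix (Fin 3) (Fin 3) ℂ))) : Set (Matrix (Fin 3) (Fin 3) ℂ)) =
      {U : Matrix (Fin 3) (Fin 3) ℂ |
        (∀ i j, ∃ f : ℕ, χ ^ f * U i j ∈ Zω) ∧ U * U.conjTranspose = 1} := by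
  apply Set.Subset.antisymm
  · intro U hU
    exact GG_ring hU
  · intro U hU
    exact fin0 hU

end
end
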